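/- Let α, β ∈ K^sep be distinct, integral over O_K. Set L = K(α), K′ = K(β), and assume L and K′ are linearly disjoint over K, i.e. [LK′:K] = [L:K]·[K′:K]. Let L′ = LK′ = K(α,β) with uniformizer π_{L′}, and set m := ν_{L′}(α − β). By linear disjointness, for each σ ∈ Hom_K(L,K̄) and τ ∈ Hom_K(K′,K̄) there is a unique στ ∈ Hom_K(L′,K̄) restricting to σ on L and to τ on K′. Then for each τ ∈ Hom_K(K′, K̄) there exists σ_τ ∈ Hom_K(L, K̄) such that for every σ ∈ Hom_K(L, K̄) with σ ≠ σ_τ one has ν_{L′}(στ(π_{L′}) − π_{L′}) ≤ ν_{L′}(σ(α) − σ_τ(α)) − m + 1. Moreover, if τ is the inclusion of K′ into K̄, then σ_τ may be taken to be the inclusion of L into K̄. -/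

import Mathlib

open IntermediateField

/-!
Let `π` be a uniformizer of a totally ramified extension of degree `n`. The nonzero terms of a sum
`∑ i < n, aᵢ πⁱ` have distinct values, so each of them has at least the value of the sum. Hence an
embedding `s` which moves `π` with relative displacement `c = ν(sπ/π - 1)` moves every `x` with
relative displacement at least `c`: this passes from `π` to the monomials `aᵢ πⁱ`, and from them
to `x`. For `x = α - β` and `s = στ` it reads `ν(στ(π) - π) - ν(π) ≤ ν(σα - γ) - ν(α - β)` with
`γ = α - β + τβ`. Choosing for `σ_τ` the embedding with `σ_τ α` nearest to `γ` gives
`ν(σα - γ) ≤ ν(σα - σ_τ α)`, and if `τ` is the inclusion then `γ = α`.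
-/

section AddValuation

variable {R Γ : Type*} [Ring R] [LinearOrderedAddCommMonoidWithTop Γ] (w : AddValuation R Γ)

theorem addValuation_sum_le_of_pairwise_ne {ι : Type*} {s : Finset ι} {f : ι → R}
    (hf : (s : Set ι).Pairwise fun i j => w (f i) = w (f j) → w (f i) = ⊤) {i : ι} (hi : i ∈ s) :
    w (∑ j ∈ s, f j) ≤ w (f i) := by
  classical
  obtain ⟨k, hk, hmin⟩ := s.exists_min_image (fun j => w (f j)) ⟨i, hi⟩
  refine le_trans ?_ (hmin i hi)
  by_cases htop : w (f k) = ⊤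
  · exact htop ▸ le_top
  have hlt : w (f k) < w (∑ j ∈ s.erase k, f j) := w.map_lt_sum htop fun j hj => by
    obtain ⟨hjk, hjs⟩ := Finset.mem_erase.mp hj
    exact (hmin j hjs).lt_of_ne fun h => htop (hf hk hjs hjk.symm h)
  rw [← Finset.add_sum_erase s f hk, w.map_add_eq_of_lt_left hlt]

theorem exists_forall_addValuation_sub_le {ι : Type*} [Finite ι] [Nonempty ι] (f : ι → R) (c : R) :
    ∃ i₀, ∀ i, w (f i - c) ≤ w (f i - f i₀) := by
  obtain ⟨i₀, hmax⟩ := Finite.exists_max fun i => w (f i - c)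
  refine ⟨i₀, fun i => ?_⟩
  rw [← sub_sub_sub_cancel_right (f i) (f i₀) c]
  exact w.map_le_sub le_rfl (hmax i)

variable {S : Type*} [Ring S] {s t : S →+* R} {c : Γ}

theorem add_map_mul_le_map_sub {x y : S} (hx : c + w (t x) ≤ w (s x - t x))
    (hy : c + w (t y) ≤ w (s y - t y)) (hst : w (t y) ≤ w (s y)) :
    c + w (t (x * y)) ≤ w (s (x * y) - t (x * y)) := by
  have hsplit : s (x * y) - t (x * y) = (s x - t x) * s y + t x * (s y - t y) := by
    rw [map_mul, map_mul]
    noncomm_ring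
  rw [hsplit, map_mul, w.map_mul]
  refine w.map_le_add ?_ ?_
  · rw [w.map_mul, ← add_assoc]
    gcongr
  · rw [w.map_mul, add_left_comm]
    gcongr

theorem add_map_pow_le_map_sub {x : S} (hx : c + w (t x) ≤ w (s x - t x))
    (hst : w (t x) ≤ w (s x)) (i : ℕ) :
    c + w (t (x ^ i)) ≤ w (s (x ^ i) - t (x ^ i)) := by
  induction i with
  | zero => simp
  | succ i ih =>
    rw [pow_succ]
    exact add_map_mul_le_map_sub w ih hx hst

end AddValuation

section TotallyRamified

variable {K E : Type*} [Field K] [Field E] [Algebra K E] (w : AddValuation E (WithTop ℚ))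
  (hK : ∀ a : K, a ≠ 0 → ∃ z : ℤ, w (algebraMap K E a) = ((z : ℚ) : WithTop ℚ))

include hK

theorem exists_nsmul_map_smul_pow_eq {n : ℕ} {π : E} (hπ : n • w π = 1) {a : K} (ha : a ≠ 0)
    (i : ℕ) :
    ∃ z : ℤ, n • w (a • π ^ i) = (((n * z + i : ℤ) : ℚ) : WithTop ℚ) := by
  obtain ⟨z, hz⟩ := hK a ha
  refine ⟨z, ?_⟩
  rw [Algebra.smul_def, w.map_mul, w.map_pow, hz, nsmul_add, smul_comm, hπ]
  norm_cast
  simp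

theorem map_smul_pow_eq_top_of_eq {n : ℕ} {π : E} (hπ : n • w π = 1) {a b : K} {i j : ℕ}
    (hi : i < n) (hj : j < n) (hij : i ≠ j) (h : w (a • π ^ i) = w (b • π ^ j)) :
    w (a • π ^ i) = ⊤ := by
  by_contra htop
  have ha : a ≠ 0 := by
    rintro rfl
    simp at htop
  have hb : b ≠ 0 := by
    rintro rfl
    simp [h] at htop
  obtain ⟨y, hy⟩ := exists_nsmul_map_smul_pow_eq w hK hπ ha i
  obtain ⟨z, hz⟩ := exists_nsmul_map_smul_pow_eq w hK hπ hb j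
  have heq : (n * y + i : ℤ) = n * z + j := by
    rw [h, hz, WithTop.coe_inj] at hy
    exact_mod_cast hy.symm
  have hmod : (i : ℤ) ≡ j [ZMOD n] := by
    simpa [Int.ModEq] using congrArg (· % (n : ℤ)) heq
  exact hij (Nat.ModEq.eq_of_lt_of_lt (Int.natCast_modEq_iff.mp hmod) hi hj)

theorem map_sum_smul_pow_le {n : ℕ} {π : E} (hπ : n • w π = 1) (a : Fin n → K) (i : Fin n) :
    w (∑ j, a j • π ^ (j : ℕ)) ≤ w (a i • π ^ (i : ℕ)) :=
  addValuation_sum_le_of_pairwise_ne w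
    (fun j _ k _ hjk h =>
      map_smul_pow_eq_top_of_eq w hK hπ j.isLt k.isLt (Fin.val_ne_of_ne hjk) h)
    (Finset.mem_univ i)

theorem linearIndependent_pow_of_nsmul_map_eq_one {n : ℕ} {π : E} (hπ : n • w π = 1) :
    LinearIndependent K fun i : Fin n => π ^ (i : ℕ) := by
  rw [Fintype.linearIndependent_iff]
  intro a ha i
  have htop : w (a i • π ^ (i : ℕ)) = ⊤ := by
    simpa [ha] using map_sum_smul_pow_le w hK hπ a i
  have hn : n ≠ 0 := (Fin.pos i).ne'
  have hπ0 : π ≠ 0 := by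
    rintro rfl
    rw [← w.map_pow, zero_pow hn, w.map_zero] at hπ
    exact WithTop.top_ne_one hπ
  simpa [hπ0] using w.top_iff.mp htop

theorem exists_sum_smul_pow_eq {π : E} (hπ : Module.finrank K E • w π = 1) (x : E) :
    ∃ a : Fin (Module.finrank K E) → K, ∑ i, a i • π ^ (i : ℕ) = x := by
  have hn : Module.finrank K E ≠ 0 := by
    intro h
    simp [h] at hπ
  have : Nonempty (Fin (Module.finrank K E)) := ⟨⟨0, Nat.pos_of_ne_zero hn⟩⟩
  have hspan := (linearIndependent_pow_of_nsmul_map_eq_one w hK hπ).span_eq_top_of_card_eq_finrank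
    (Fintype.card_fin _)
  exact (Submodule.mem_span_range_iff_exists_fun K).mp (hspan ▸ Submodule.mem_top)

end TotallyRamified

theorem add_map_le_map_sub_of_uniformizer {K E F : Type*} [Field K] [Field E] [Algebra K E]
    [Field F] [Algebra K F] (w : AddValuation F (WithTop ℚ))
    (hK : ∀ a : K, a ≠ 0 → ∃ z : ℤ, w (algebraMap K F a) = ((z : ℚ) : WithTop ℚ))
    {s t : E →ₐ[K] F} {π : E} (hπ : Module.finrank K E • w (t π) = 1) (hst : w (t π) ≤ w (s π))
    {c : WithTop ℚ} (hc : c + w (t π) ≤ w (s π - t π)) (x : E) :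
    c + w (t x) ≤ w (s x - t x) := by
  have hK' : ∀ a : K, a ≠ 0 →
      ∃ z : ℤ, w.comap (t : E →+* F) (algebraMap K E a) = ((z : ℚ) : WithTop ℚ) := fun a ha =>
    (hK a ha).imp fun _ hz => (congrArg w (t.commutes a)).trans hz
  obtain ⟨a, rfl⟩ := exists_sum_smul_pow_eq (w.comap (t : E →+* F)) hK' hπ x
  have hmonomial (i : Fin (Module.finrank K E)) :
      c + w (t (a i • π ^ (i : ℕ))) ≤ w (s (a i • π ^ (i : ℕ)) - t (a i • π ^ (i : ℕ))) := by
    have hpow : c + w (t (π ^ (i : ℕ))) ≤ w (s (π ^ (i : ℕ)) - t (π ^ (i : ℕ))) :=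
      add_map_pow_le_map_sub w (s := (s : E →+* F)) (t := (t : E →+* F)) hc hst i
    rw [map_smul s, map_smul t, ← smul_sub, Algebra.smul_def, Algebra.smul_def, w.map_mul,
      w.map_mul, add_left_comm]
    gcongr
  have hterm (i : Fin (Module.finrank K E)) :
      w (t (∑ j, a j • π ^ (j : ℕ))) ≤ w (t (a i • π ^ (i : ℕ))) :=
    map_sum_smul_pow_le (w.comap (t : E →+* F)) hK' hπ a i
  have hsum : s (∑ j, a j • π ^ (j : ℕ)) - t (∑ j, a j • π ^ (j : ℕ)) =
      ∑ j, (s (a j • π ^ (j : ℕ)) - t (a j • π ^ (j : ℕ))) := by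
    rw [map_sum, map_sum, ← Finset.sum_sub_distrib]
  rw [hsum]
  exact w.map_le_sum fun i _ => (add_le_add_right (hterm i) c).trans (hmonomial i)

theorem algHom_apply_gen_injective {K F L : Type*} [Field K] [Field F] [Algebra K F] [Semiring L]
    [Algebra K L] {α : F} : Function.Injective fun σ : K⟮α⟯ →ₐ[K] L => σ (AdjoinSimple.gen K α) :=
  fun _ _ h => adjoin_algHom_ext K fun x hx => by
    obtain rfl := Set.mem_singleton_iff.mp hx
    exact h

theorem apply_algHom_eq_of_algEquiv_invariant {K F X : Type*} [Field K] [Field F] [Algebra K F]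
    [Normal K F] {v : F → X} (hv : ∀ (σ : F ≃ₐ[K] F) (x : F), v (σ x) = v x)
    {E : IntermediateField K F} (s : E →ₐ[K] F) (x : E) : v (s x) = v x := by
  have hconj : IsConjRoot K (s x) (x : F) :=
    (minpoly.algHom_eq s s.injective x).trans (minpoly.algHom_eq E.val E.val.injective x).symm
  obtain ⟨σ, hσ⟩ := hconj.exists_algEquiv
  rw [← hσ, hv]

/-- The additive valuation with the values of `v : R → ℚ` away from `0`. The value of `v` at `0` is
arbitrary and gets replaced by `⊤`. -/
noncomputable def ratAddValuation {R : Type*} [Ring R] [IsDomain R] (v : R → ℚ)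
    (hmul : ∀ x y : R, x ≠ 0 → y ≠ 0 → v (x * y) = v x + v y)
    (hadd : ∀ x y : R, x ≠ 0 → y ≠ 0 → x + y ≠ 0 → min (v x) (v y) ≤ v (x + y)) :
    AddValuation R (WithTop ℚ) := by
  classical
  refine AddValuation.of (fun x => if x = 0 then ⊤ else (v x : WithTop ℚ)) (if_pos rfl) ?_ ?_ ?_
  · have h1 : v 1 = 0 := by simpa using hmul 1 1 one_ne_zero one_ne_zero
    simp [h1]
  · intro x y
    by_cases hx : x = 0
    · simp [hx]
    by_cases hy : y = 0
    · simp [hy]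
    by_cases hxy : x + y = 0
    · simp [hxy]
    simpa only [hx, hy, hxy, if_false, ← WithTop.coe_min, WithTop.coe_le_coe]
      using hadd x y hx hy hxy
  · intro x y
    by_cases hx : x = 0
    · simp [hx]
    by_cases hy : y = 0
    · simp [hy]
    simp [hx, hy, hmul x y hx hy]

section RatAddValuation

variable {R : Type*} [Ring R] [IsDomain R] {v : R → ℚ}
  (hmul : ∀ x y : R, x ≠ 0 → y ≠ 0 → v (x * y) = v x + v y)
  (hadd : ∀ x y : R, x ≠ 0 → y ≠ 0 → x + y ≠ 0 → min (v x) (v y) ≤ v (x + y))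

theorem ratAddValuation_apply {x : R} (hx : x ≠ 0) :
    ratAddValuation v hmul hadd x = (v x : WithTop ℚ) :=
  if_neg hx

theorem le_of_ratAddValuation_le {x y : R} (hx : x ≠ 0) (hy : y ≠ 0)
    (h : ratAddValuation v hmul hadd x ≤ ratAddValuation v hmul hadd y) : v x ≤ v y := by
  rwa [ratAddValuation_apply hmul hadd hx, ratAddValuation_apply hmul hadd hy,
    WithTop.coe_le_coe] at h

end RatAddValuation

section GaloisInvariant

variable {K F : Type*} [Field K] [Field F] [Algebra K F] [Normal K F] {v : F → ℚ}
  (hv_mul : ∀ x y : F, x ≠ 0 → y ≠ 0 → v (x * y) = v x + v y)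
  (hv_add : ∀ x y : F, x ≠ 0 → y ≠ 0 → x + y ≠ 0 → min (v x) (v y) ≤ v (x + y))
  (hv_gal : ∀ (σ : F ≃ₐ[K] F) (x : F), v (σ x) = v x)
  (hv_int : ∀ a : K, a ≠ 0 → ∃ z : ℤ, v (algebraMap K F a) = z)
  {E : IntermediateField K F} {π : E}

include hv_mul hv_add hv_gal hv_int

theorem sub_add_le_of_uniformizer (hπ0 : π ≠ 0) (hπ : (Module.finrank K E : ℚ) * v π = 1)
    {s : E →ₐ[K] F} {x : E} (hsx : s x ≠ x) :
    v (s π - π) - v π + v x ≤ v (s x - x) := by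
  have hx : x ≠ 0 := by
    rintro rfl
    simp at hsx
  have hxF : (x : F) ≠ 0 := by simpa using hx
  have hπF : (π : F) ≠ 0 := by simpa using hπ0
  have hsπ : s π ≠ 0 := by simpa using hπ0
  set w := ratAddValuation v hv_mul hv_add
  have hw {y : F} (hy : y ≠ 0) : w y = v y := ratAddValuation_apply hv_mul hv_add hy
  have hwK (a : K) (ha : a ≠ 0) : ∃ z : ℤ, w (algebraMap K F a) = ((z : ℚ) : WithTop ℚ) :=
    (hv_int a ha).imp fun z hz => by rw [hw (by simpa using ha), hz]
  have hwπ : Module.finrank K E • w (E.val π) = 1 := by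
    rw [IntermediateField.coe_val, hw hπF, ← WithTop.coe_nsmul, nsmul_eq_mul, hπ, WithTop.coe_one]
  have hwsπ : w (E.val π) ≤ w (s π) := by
    rw [IntermediateField.coe_val, hw hπF, hw hsπ, apply_algHom_eq_of_algEquiv_invariant hv_gal]
  have hdispl {c : WithTop ℚ} (hc : c + w π ≤ w (s π - π)) : c + w x ≤ w (s x - x) :=
    add_map_le_map_sub_of_uniformizer w hwK hwπ hwsπ hc x
  have hsπ_ne : s π - π ≠ 0 := by
    intro hfix
    have htop := hdispl (c := ⊤) (by simp [hfix])
    rw [top_add, top_le_iff, w.top_iff, sub_eq_zero] at htop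
    exact hsx htop
  have hle := hdispl (c := (v (s π - π) - v π : ℚ))
    (by rw [hw hπF, hw hsπ_ne, ← WithTop.coe_add, sub_add_cancel])
  rwa [hw hxF, hw (sub_ne_zero.mpr hsx), ← WithTop.coe_add, WithTop.coe_le_coe] at hle

theorem finrank_mul_sub_le (hπ : (Module.finrank K E : ℚ) * v π = 1) {s : E →ₐ[K] F} {x : E}
    (hsx : s x ≠ x) :
    (Module.finrank K E : ℚ) * v (s π - π) ≤
      (Module.finrank K E : ℚ) * v (s x - x) - (Module.finrank K E : ℚ) * v x + 1 := by
  suffices hle : v (s π - π) - v π + v x ≤ v (s x - x) by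
    have := mul_le_mul_of_nonneg_left hle (Nat.cast_nonneg (α := ℚ) (Module.finrank K E))
    linarith
  by_cases hπ0 : π = 0
  · -- `v 0` is arbitrary, so `π = 0` may occur; the claim is then the ultrametric inequality.
    have hx : x ≠ 0 := by
      rintro rfl
      simp at hsx
    have hxF : (x : F) ≠ 0 := by simpa using hx
    have hsxF : s x ≠ 0 := by simpa using hx
    have hsx_val : ratAddValuation v hv_mul hv_add x ≤ ratAddValuation v hv_mul hv_add (s x) := by
      rw [ratAddValuation_apply hv_mul hv_add hxF, ratAddValuation_apply hv_mul hv_add hsxF,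
        apply_algHom_eq_of_algEquiv_invariant hv_gal]
    simpa [hπ0] using le_of_ratAddValuation_le hv_mul hv_add hxF (sub_ne_zero.mpr hsx)
      (AddValuation.map_le_sub _ hsx_val le_rfl)
  · exact sub_add_le_of_uniformizer hv_mul hv_add hv_gal hv_int hπ0 hπ hsx

theorem finrank_mul_sub_le_of_nearest {α β : F} (hα : K⟮α⟯ ≤ E) (hβ : K⟮β⟯ ≤ E)
    (hπ : (Module.finrank K E : ℚ) * v π = 1) {s : E →ₐ[K] F} {σ' : K⟮α⟯ →ₐ[K] F}
    (hne : s.comp (inclusion hα) ≠ σ')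
    (hnear : ratAddValuation v hv_mul hv_add (s.comp (inclusion hα) (AdjoinSimple.gen K α) -
        (α - β + s.comp (inclusion hβ) (AdjoinSimple.gen K β))) ≤
      ratAddValuation v hv_mul hv_add
        (s.comp (inclusion hα) (AdjoinSimple.gen K α) - σ' (AdjoinSimple.gen K α))) :
    (Module.finrank K E : ℚ) * v (s π - π) ≤
      (Module.finrank K E : ℚ) *
          v (s.comp (inclusion hα) (AdjoinSimple.gen K α) - σ' (AdjoinSimple.gen K α)) -
        (Module.finrank K E : ℚ) * v (α - β) + 1 := by
  set x : E := inclusion hα (AdjoinSimple.gen K α) - inclusion hβ (AdjoinSimple.gen K β)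
  set d := s.comp (inclusion hα) (AdjoinSimple.gen K α) - σ' (AdjoinSimple.gen K α)
  have hx : (x : F) = α - β := by simp [x]
  have hdispl : s.comp (inclusion hα) (AdjoinSimple.gen K α) -
      (α - β + s.comp (inclusion hβ) (AdjoinSimple.gen K β)) = s x - x := by
    rw [hx, map_sub]
    simp only [AlgHom.comp_apply]
    ring
  have hd : d ≠ 0 := sub_ne_zero.mpr (algHom_apply_gen_injective.ne hne)
  rw [hdispl] at hnear
  have hsx : s x - x ≠ 0 := by
    intro h0
    rw [h0, AddValuation.map_zero, top_le_iff, AddValuation.top_iff] at hnear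
    exact hd hnear
  have hle : v (s x - x) ≤ v d := le_of_ratAddValuation_le hv_mul hv_add hsx hd hnear
  calc (Module.finrank K E : ℚ) * v (s π - π)
      ≤ Module.finrank K E * v (s x - x) - Module.finrank K E * v x + 1 :=
        finrank_mul_sub_le hv_mul hv_add hv_gal hv_int hπ (sub_ne_zero.mp hsx)
    _ ≤ Module.finrank K E * v d - Module.finrank K E * v (α - β) + 1 := by
        rw [← hx]
        gcongr

end GaloisInvariant

theorem exists_sigma_tau_bound_general {K F : Type*} [Field K] [Field F] [Algebra K F] [Normal K F]
    (v : F → ℚ) (hv_mul : ∀ x y : F, x ≠ 0 → y ≠ 0 → v (x * y) = v x + v y)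
    (hv_add : ∀ x y : F, x ≠ 0 → y ≠ 0 → x + y ≠ 0 → min (v x) (v y) ≤ v (x + y))
    (hv_gal : ∀ (σ : F ≃ₐ[K] F) (x : F), v (σ x) = v x)
    (hv_int : ∀ a : K, a ≠ 0 → ∃ z : ℤ, v (algebraMap K F a) = z)
    {α β : F} {E : IntermediateField K F} (hα : K⟮α⟯ ≤ E) (hβ : K⟮β⟯ ≤ E)
    {π : E} (hπ : (Module.finrank K E : ℚ) * v π = 1) :
    (∀ τ : K⟮β⟯ →ₐ[K] F, ∃ στ : K⟮α⟯ →ₐ[K] F, ∀ s : E →ₐ[K] F,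
      s.comp (inclusion hβ) = τ → s.comp (inclusion hα) ≠ στ →
      (Module.finrank K E : ℚ) * v (s π - π) ≤
        (Module.finrank K E : ℚ) *
            v (s.comp (inclusion hα) (AdjoinSimple.gen K α) - στ (AdjoinSimple.gen K α)) -
          (Module.finrank K E : ℚ) * v (α - β) + 1) ∧
    (∀ s : E →ₐ[K] F, s.comp (inclusion hβ) = K⟮β⟯.val → s.comp (inclusion hα) ≠ K⟮α⟯.val →
      (Module.finrank K E : ℚ) * v (s π - π) ≤
        (Module.finrank K E : ℚ) *
            v (s.comp (inclusion hα) (AdjoinSimple.gen K α) - K⟮α⟯.val (AdjoinSimple.gen K α)) -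
          (Module.finrank K E : ℚ) * v (α - β) + 1) := by
  constructor
  · intro τ
    have : FiniteDimensional K K⟮α⟯ :=
      adjoin.finiteDimensional (Algebra.IsIntegral.isIntegral α)
    have : Nonempty (K⟮α⟯ →ₐ[K] F) := ⟨K⟮α⟯.val⟩
    obtain ⟨στ, hnearest⟩ := exists_forall_addValuation_sub_le (ratAddValuation v hv_mul hv_add)
      (fun σ : K⟮α⟯ →ₐ[K] F => σ (AdjoinSimple.gen K α))
      (α - β + τ (AdjoinSimple.gen K β))
    refine ⟨στ, ?_⟩
    rintro s rfl hne
    exact finrank_mul_sub_le_of_nearest hv_mul hv_add hv_gal hv_int hα hβ hπ hne (hnearest _)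
  · intro s hτ hne
    refine finrank_mul_sub_le_of_nearest hv_mul hv_add hv_gal hv_int hα hβ hπ hne ?_
    simp [hτ]

/-- Let `K` be a field, Henselian with respect to a discrete valuation
`ν_K` with algebraically closed residue field, with fixed algebraic closure `Kbar` and
(unique, Galois-invariant) extension `v` of `ν_K`, normalized so that a uniformizer
`πK` satisfies `v πK = 1` and `v` is `ℤ`-valued on `K`; algebraic closedness of the
residue field is expressed by `hv_res`.

Let `α, β ∈ K^sep` be distinct, integral over `O_K`.  Set `L = K(α)`, `K′ = K(β)`,
and assume `L` and `K′` are linearly disjoint over `K`, i.e.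
`[LK′:K] = [L:K]·[K′:K]`.  Let `L′ = LK′ = K(α,β)` with uniformizer `π_{L′}`
(`ν_{L′} = [L′:K]·ν`), and set `m := ν_{L′}(α − β)`.  By linear disjointness, each
`s ∈ Hom_K(L′,Kbar)` is determined by the pair `(σ, τ) = (s|_L, s|_{K′})`, and every
pair arises; `στ` denotes the element with restrictions `σ` and `τ`.  Then for each
`τ ∈ Hom_K(K′, Kbar)` there exists `σ_τ ∈ Hom_K(L, Kbar)` such that for every
`σ ∈ Hom_K(L, Kbar)` with `σ ≠ σ_τ` one has
`ν_{L′}(στ(π_{L′}) − π_{L′}) ≤ ν_{L′}(σ(α) − σ_τ(α)) − m + 1`.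
Moreover, if `τ` is the inclusion of `K′` into `Kbar`, then `σ_τ` may be taken to be
the inclusion of `L` into `Kbar`. -/
theorem exists_sigma_tau_bound
    {K Kbar : Type*} [Field K] [Field Kbar] [Algebra K Kbar] [IsAlgClosure K Kbar]
    (v : Kbar → ℚ)
    (hv_mul : ∀ x y : Kbar, x ≠ 0 → y ≠ 0 → v (x * y) = v x + v y)
    (hv_add : ∀ x y : Kbar, x ≠ 0 → y ≠ 0 → x + y ≠ 0 → min (v x) (v y) ≤ v (x + y))
    (hv_gal : ∀ (σ : Kbar ≃ₐ[K] Kbar) (x : Kbar), v (σ x) = v x)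
    (hv_int : ∀ x : K, x ≠ 0 → ∃ n : ℤ, v (algebraMap K Kbar x) = (n : ℚ))
    (πK : K) (hπK : πK ≠ 0 ∧ v (algebraMap K Kbar πK) = 1)
    (hv_res : ∀ x : Kbar, x ≠ 0 → 0 ≤ v x →
      ∃ η : K, x = algebraMap K Kbar η ∨ 0 < v (x - algebraMap K Kbar η))
    (α β : Kbar) (hαβ : α ≠ β)
    (hsepα : (minpoly K α).Separable) (hsepβ : (minpoly K β).Separable)
    (hintα : α = 0 ∨ 0 ≤ v α) (hintβ : β = 0 ∨ 0 ≤ v β)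
    (h1 : IntermediateField.adjoin K ({α} : Set Kbar)
        ≤ IntermediateField.adjoin K ({α, β} : Set Kbar))
    (h2 : IntermediateField.adjoin K ({β} : Set Kbar)
        ≤ IntermediateField.adjoin K ({α, β} : Set Kbar))
    (hdisj : Module.finrank K ↥(IntermediateField.adjoin K ({α, β} : Set Kbar)) =
      Module.finrank K ↥(IntermediateField.adjoin K ({α} : Set Kbar)) *
      Module.finrank K ↥(IntermediateField.adjoin K ({β} : Set Kbar)))
    (πL' : ↥(IntermediateField.adjoin K ({α, β} : Set Kbar)))
    (hπL' : (Module.finrank K ↥(IntermediateField.adjoin K ({α, β} : Set Kbar)) : ℚ)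
        * v (πL' : Kbar) = 1)
    (m : ℚ)
    (hm : m = (Module.finrank K ↥(IntermediateField.adjoin K ({α, β} : Set Kbar)) : ℚ)
        * v (α - β)) :
    (∀ τ : ↥(IntermediateField.adjoin K ({β} : Set Kbar)) →ₐ[K] Kbar,
      ∃ στ : ↥(IntermediateField.adjoin K ({α} : Set Kbar)) →ₐ[K] Kbar,
        ∀ s : ↥(IntermediateField.adjoin K ({α, β} : Set Kbar)) →ₐ[K] Kbar,
          s.comp (IntermediateField.inclusion h2) = τ →
          s.comp (IntermediateField.inclusion h1) ≠ στ →
          (Module.finrank K ↥(IntermediateField.adjoin K ({α, β} : Set Kbar)) : ℚ)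
              * v (s πL' - (πL' : Kbar))
            ≤ (Module.finrank K ↥(IntermediateField.adjoin K ({α, β} : Set Kbar)) : ℚ)
              * v ((s.comp (IntermediateField.inclusion h1))
                    (IntermediateField.AdjoinSimple.gen K α)
                  - στ (IntermediateField.AdjoinSimple.gen K α)) - m + 1) ∧
    (∀ s : ↥(IntermediateField.adjoin K ({α, β} : Set Kbar)) →ₐ[K] Kbar,
      s.comp (IntermediateField.inclusion h2)
          = (IntermediateField.adjoin K ({β} : Set Kbar)).val →
      s.comp (IntermediateField.inclusion h1)
          ≠ (IntermediateField.adjoin K ({α} : Set Kbar)).val →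
      (Module.finrank K ↥(IntermediateField.adjoin K ({α, β} : Set Kbar)) : ℚ)
          * v (s πL' - (πL' : Kbar))
        ≤ (Module.finrank K ↥(IntermediateField.adjoin K ({α, β} : Set Kbar)) : ℚ)
          * v ((s.comp (IntermediateField.inclusion h1))
                (IntermediateField.AdjoinSimple.gen K α)
              - (IntermediateField.adjoin K ({α} : Set Kbar)).val
                  (IntermediateField.AdjoinSimple.gen K α)) - m + 1) := by
  subst hm
  exact exists_sigma_tau_bound_general v hv_mul hv_add hv_gal hv_int h1 h2 hπL'
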